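/- arXiv:1812.05646 — 3 statements merged into one kernel-verified Lean document; each statement's English description precedes it below -/
import Mathlib

section
/- Let U ⊆ ℝ⁴ be open and let Γ : Fin 4 → Fin 4 → Fin 4 → (U → ℝ), written Γ^n_{bm}, be a family of smooth functions (connection coefficients, with one-form index b and matrix indices n, m). Define the curvature R^n_{m ab} = ∂_a Γ^n_{bm} − ∂_b Γ^n_{am} + Σ_l (Γ^n_{al} Γ^l_{bm} − Γ^n_{bl} Γ^l_{am}) and the Chern–Simons current K^a = Σ_{b,c,d} ε̃(a,b,c,d) Σ_{n,m} Γ^n_{bm} ( ∂_c Γ^m_{dn} + (2/3) Σ_l Γ^m_{cl} Γ^l_{dn} ). Then on all of U one has the Pontryagin identity Σ_a ∂_a K^a = (1/4) Σ_{a,b,c,d} ε̃(a,b,c,d) Σ_{n,m} R^n_{m ab} R^m_{n cd}, i.e. the Pontryagin density is the divergence of the Chern–Simons topological current. -/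
open scoped BigOperators

/-- The Levi-Civita symbol on `Fin 4`: the sign of the permutation sending
`(0,1,2,3)` to `(a,b,c,d)` when the four indices are distinct, and `0` otherwise. -/
noncomputable def leviCivita (a b c d : Fin 4) : ℝ :=
  ∑ σ : Equiv.Perm (Fin 4),
    if σ 0 = a ∧ σ 1 = b ∧ σ 2 = c ∧ σ 3 = d then ((Equiv.Perm.sign σ : ℤ) : ℝ) else 0

/-- Partial derivative of `f : (Fin 4 → ℝ) → ℝ` in the `a`-th coordinate direction. -/
noncomputable def pd (a : Fin 4) (f : (Fin 4 → ℝ) → ℝ) (x : Fin 4 → ℝ) : ℝ :=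
  fderiv ℝ f x (Pi.single a 1)

/-- The curvature `R^n_{m ab}` of the connection coefficients `Γ^n_{bm}`. -/
noncomputable def curv (Γ : Fin 4 → Fin 4 → Fin 4 → (Fin 4 → ℝ) → ℝ)
    (n m a b : Fin 4) (x : Fin 4 → ℝ) : ℝ :=
  pd a (Γ n b m) x - pd b (Γ n a m) x
    + ∑ l : Fin 4, (Γ n a l x * Γ l b m x - Γ n b l x * Γ l a m x)

/-- The Chern–Simons topological current
`K^a = ε̃(a,b,c,d) Γ^n_{bm} (∂_c Γ^m_{dn} + (2/3) Γ^m_{cl} Γ^l_{dn})`. -/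
noncomputable def csCurrent (Γ : Fin 4 → Fin 4 → Fin 4 → (Fin 4 → ℝ) → ℝ)
    (a : Fin 4) (x : Fin 4 → ℝ) : ℝ :=
  ∑ b : Fin 4, ∑ c : Fin 4, ∑ d : Fin 4, leviCivita a b c d *
    ∑ n : Fin 4, ∑ m : Fin 4,
      Γ n b m x * (pd c (Γ m d n) x + (2/3) * ∑ l : Fin 4, Γ m c l x * Γ l d n x)

open Equiv in
lemma lc_perm (τ : Equiv.Perm (Fin 4)) (v : Fin 4 → Fin 4) :
    leviCivita (v (τ 0)) (v (τ 1)) (v (τ 2)) (v (τ 3))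
      = ((Equiv.Perm.sign τ : ℤ) : ℝ) * leviCivita (v 0) (v 1) (v 2) (v 3) := by
  have key : ∀ (σ : Equiv.Perm (Fin 4)) (w : Fin 4 → Fin 4),
      (σ 0 = w 0 ∧ σ 1 = w 1 ∧ σ 2 = w 2 ∧ σ 3 = w 3) ↔ (σ : Fin 4 → Fin 4) = w := by
    intro σ w
    constructor
    · rintro ⟨h0, h1, h2, h3⟩
      funext i
      fin_cases i <;> assumption
    · rintro rfl
      simp
  unfold leviCivita
  rw [Finset.mul_sum, ← Equiv.sum_comp (Equiv.mulRight τ)]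
  refine Finset.sum_congr rfl fun σ _ => ?_
  have h1 := key (σ * τ) (fun i => v (τ i))
  have h2 := key σ v
  simp only [Equiv.coe_mulRight, h1, h2]
  have h3 : ((σ * τ : Equiv.Perm (Fin 4)) : Fin 4 → Fin 4) = (fun i => v (τ i)) ↔
      (σ : Fin 4 → Fin 4) = v := by
    constructor
    · intro h
      funext i
      have := congrFun h (τ⁻¹ i)
      simpa using this
    · rintro rfl
      rfl
  simp only [h3]
  split_ifs
  · simp [mul_comm]
  · simp

lemma lc01 (a b c d : Fin 4) : leviCivita b a c d = - leviCivita a b c d := by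
  have := lc_perm (Equiv.swap 0 1) ![a, b, c, d]
  simpa [Equiv.swap_apply_def, Equiv.Perm.sign_swap] using this

lemma lc12 (a b c d : Fin 4) : leviCivita a c b d = - leviCivita a b c d := by
  have := lc_perm (Equiv.swap 1 2) ![a, b, c, d]
  simpa [Equiv.swap_apply_def, Equiv.Perm.sign_swap] using this

lemma lc23 (a b c d : Fin 4) : leviCivita a b d c = - leviCivita a b c d := by
  have := lc_perm (Equiv.swap 2 3) ![a, b, c, d]
  simpa [Equiv.swap_apply_def, Equiv.Perm.sign_swap] using this

/-- Full contraction with the Levi-Civita symbol. -/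
noncomputable def SS (f : Fin 4 → Fin 4 → Fin 4 → Fin 4 → ℝ) : ℝ :=
  ∑ a : Fin 4, ∑ b : Fin 4, ∑ c : Fin 4, ∑ d : Fin 4, leviCivita a b c d * f a b c d

lemma SS_add (f g : Fin 4 → Fin 4 → Fin 4 → Fin 4 → ℝ) :
    SS (fun a b c d => f a b c d + g a b c d) = SS f + SS g := by
  simp only [SS, mul_add, Finset.sum_add_distrib]

lemma SS_sub (f g : Fin 4 → Fin 4 → Fin 4 → Fin 4 → ℝ) :
    SS (fun a b c d => f a b c d - g a b c d) = SS f - SS g := by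
  simp only [SS, mul_sub, Finset.sum_sub_distrib]

lemma SS_smul (r : ℝ) (f : Fin 4 → Fin 4 → Fin 4 → Fin 4 → ℝ) :
    SS (fun a b c d => r * f a b c d) = r * SS f := by
  simp only [SS, Finset.mul_sum, mul_left_comm]

lemma SS01 (f : Fin 4 → Fin 4 → Fin 4 → Fin 4 → ℝ) :
    SS (fun a b c d => f b a c d) = - SS f := by
  unfold SS
  rw [Finset.sum_comm]
  simp only [← Finset.sum_neg_distrib]
  refine Finset.sum_congr rfl fun a _ => Finset.sum_congr rfl fun b _ =>
    Finset.sum_congr rfl fun c _ => Finset.sum_congr rfl fun d _ => ?_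
  rw [lc01 a b]; ring

lemma SS12 (f : Fin 4 → Fin 4 → Fin 4 → Fin 4 → ℝ) :
    SS (fun a b c d => f a c b d) = - SS f := by
  unfold SS
  simp only [← Finset.sum_neg_distrib]
  refine Finset.sum_congr rfl fun a _ => ?_
  rw [Finset.sum_comm]
  refine Finset.sum_congr rfl fun b _ =>
    Finset.sum_congr rfl fun c _ => Finset.sum_congr rfl fun d _ => ?_
  rw [lc12 a b]; ring

lemma SS23 (f : Fin 4 → Fin 4 → Fin 4 → Fin 4 → ℝ) :
    SS (fun a b c d => f a b d c) = - SS f := by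
  unfold SS
  simp only [← Finset.sum_neg_distrib]
  refine Finset.sum_congr rfl fun a _ => Finset.sum_congr rfl fun b _ => ?_
  rw [Finset.sum_comm]
  refine Finset.sum_congr rfl fun c _ => Finset.sum_congr rfl fun d _ => ?_
  rw [lc23 a b]; ring

open Matrix in
lemma alg (A : Fin 4 → Matrix (Fin 4) (Fin 4) ℝ) (D : Fin 4 → Fin 4 → Matrix (Fin 4) (Fin 4) ℝ)
    (H : Fin 4 → Fin 4 → Fin 4 → Matrix (Fin 4) (Fin 4) ℝ) (hH : ∀ a b c, H a b c = H b a c) :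
    SS (fun a b c d => trace (D a b * D c d) + trace (A b * H a c d)
      + (2/3) * (trace (D a b * A c * A d) + trace (A b * D a c * A d) + trace (A b * A c * D a d)))
    = (1/4) * SS (fun a b c d => trace ((D a b - D b a + (A a * A b - A b * A a)) *
        (D c d - D d c + (A c * A d - A d * A c)))) := by
  set E : Fin 4 → Fin 4 → Matrix (Fin 4) (Fin 4) ℝ := fun a b => D a b + A a * A b with hE
  have hR : ∀ a b c d, trace ((D a b - D b a + (A a * A b - A b * A a)) *
        (D c d - D d c + (A c * A d - A d * A c)))
      = (trace (E a b * E c d) - trace (E b a * E c d))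
        - (trace (E a b * E d c) - trace (E b a * E d c)) := by
    intro a b c d
    simp only [hE, ← trace_sub]
    congr 1
    noncomm_ring
  simp only [hR]
  set X := SS (fun a b c d => trace (D a b * A c * A d)) with hX
  have e0 : SS (fun a b c d => trace (E b a * E c d)) = - SS (fun a b c d => trace (E a b * E c d)) :=
    SS01 (fun a b c d => trace (E a b * E c d))
  have e1 : SS (fun a b c d => trace (E a b * E d c)) = - SS (fun a b c d => trace (E a b * E c d)) :=
    SS23 (fun a b c d => trace (E a b * E c d))
  have e2 : SS (fun a b c d => trace (E b a * E d c)) = SS (fun a b c d => trace (E a b * E c d)) := by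
    rw [SS01 (fun a b c d => trace (E a b * E d c)), e1, neg_neg]
  have h0 : SS (fun a b c d => trace (A b * H a c d)) = 0 := by
    have h1 := SS01 (fun a b c d => trace (A b * H a c d))
    have h2 := SS12 (fun a b c d => trace (A a * H b c d))
    have h3 : SS (fun a b c d => trace (A a * H c b d)) = SS (fun a b c d => trace (A a * H b c d)) := by
      congr 1; funext a b c d; rw [hH]
    linarith
  have h1 : SS (fun a b c d => trace (A b * D a c * A d)) = X := by
    have : (fun a b c d => trace (A b * D a c * A d)) = fun a b c d => trace (D a c * A d * A b) := by
      funext a b c d; rw [mul_assoc, trace_mul_comm]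
    rw [this, SS12 (fun a b c d => trace (D a b * A d * A c)),
      SS23 (fun a b c d => trace (D a b * A c * A d)), neg_neg]
  have h2 : SS (fun a b c d => trace (A b * A c * D a d)) = X := by
    have : (fun a b c d => trace (A b * A c * D a d)) = fun a b c d => trace (D a d * A b * A c) := by
      funext a b c d; rw [trace_mul_comm, mul_assoc]
    rw [this, SS23 (fun a b c d => trace (D a c * A b * A d)),
      SS12 (fun a b c d => trace (D a b * A c * A d)), neg_neg]
  have h3 : SS (fun a b c d => trace (A a * A b * D c d)) = X := by
    have : (fun a b c d => trace (A a * A b * D c d)) = fun a b c d => trace (D c d * A a * A b) := by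
      funext a b c d; rw [trace_mul_comm, mul_assoc]
    rw [this, SS12 (fun a b c d => trace (D b d * A a * A c)),
      SS01 (fun a b c d => trace (D a d * A b * A c)),
      SS23 (fun a b c d => trace (D a c * A b * A d)),
      SS12 (fun a b c d => trace (D a b * A c * A d))]
    simp [hX]
  have h4 : SS (fun a b c d => trace (A a * A b * (A c * A d))) = 0 := by
    have e : (fun a b c d => trace (A a * A b * (A c * A d)))
        = fun a b c d => trace (A b * A c * (A d * A a)) := by
      funext a b c d
      rw [mul_assoc, trace_mul_comm]; simp only [mul_assoc]
    have : SS (fun a b c d => trace (A b * A c * (A d * A a)))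
        = - SS (fun a b c d => trace (A a * A b * (A c * A d))) := by
      rw [SS01 (fun a b c d => trace (A a * A c * (A d * A b))),
        SS12 (fun a b c d => trace (A a * A b * (A d * A c))),
        SS23 (fun a b c d => trace (A a * A b * (A c * A d)))]
      ring
    rw [← e] at this
    linarith
  have h5 : SS (fun a b c d => trace (E a b * E c d))
      = SS (fun a b c d => trace (D a b * D c d)) + 2 * X := by
    have : (fun a b c d => trace (E a b * E c d)) = fun a b c d =>
        trace (D a b * D c d) + trace (D a b * A c * A d) + trace (A a * A b * D c d)
          + trace (A a * A b * (A c * A d)) := by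
      funext a b c d
      simp only [hE, ← trace_add]
      congr 1
      noncomm_ring
    rw [this]
    simp only [SS_add]
    rw [h3, h4]; ring
  simp only [SS_add, SS_sub, SS_smul]
  rw [e0, e1, e2, h0, h1, h2, h5]
  ring

lemma pd_add {a : Fin 4} {f g : (Fin 4 → ℝ) → ℝ} {x : Fin 4 → ℝ}
    (hf : DifferentiableAt ℝ f x) (hg : DifferentiableAt ℝ g x) :
    pd a (fun y => f y + g y) x = pd a f x + pd a g x := by
  simp [pd, fderiv_fun_add hf hg]

lemma pd_mul {a : Fin 4} {f g : (Fin 4 → ℝ) → ℝ} {x : Fin 4 → ℝ}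
    (hf : DifferentiableAt ℝ f x) (hg : DifferentiableAt ℝ g x) :
    pd a (fun y => f y * g y) x = pd a f x * g x + f x * pd a g x := by
  simp [pd, fderiv_fun_mul hf hg]; ring

lemma pd_cmul {a : Fin 4} {g : (Fin 4 → ℝ) → ℝ} {x : Fin 4 → ℝ} (r : ℝ)
    (hg : DifferentiableAt ℝ g x) :
    pd a (fun y => r * g y) x = r * pd a g x := by
  simp [pd, fderiv_const_mul hg]

lemma pd_sum {a : Fin 4} {f : Fin 4 → (Fin 4 → ℝ) → ℝ} {x : Fin 4 → ℝ}
    (hf : ∀ i, DifferentiableAt ℝ (f i) x) :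
    pd a (fun y => ∑ i, f i y) x = ∑ i, pd a (f i) x := by
  simp [pd, fderiv_fun_sum (fun i _ => hf i)]

lemma pd_diff {f : (Fin 4 → ℝ) → ℝ} {x : Fin 4 → ℝ} (hf : ContDiffAt ℝ (⊤ : ℕ∞) f x) (a : Fin 4) :
    DifferentiableAt ℝ (pd a f) x := by
  have h : ContDiffAt ℝ 1 (fderiv ℝ f) x := hf.fderiv_right (by norm_cast)
  exact (h.differentiableAt (by simp)).clm_apply (differentiableAt_const _)

lemma pd_comm {f : (Fin 4 → ℝ) → ℝ} {x : Fin 4 → ℝ} (hf : ContDiffAt ℝ (⊤ : ℕ∞) f x)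
    (a b : Fin 4) : pd a (pd b f) x = pd b (pd a f) x := by
  have h : ContDiffAt ℝ 1 (fderiv ℝ f) x := hf.fderiv_right (by norm_cast)
  have h' := h.differentiableAt (by simp)
  have key : ∀ a b, pd a (pd b f) x = fderiv ℝ (fderiv ℝ f) x (Pi.single a 1) (Pi.single b 1) := by
    intro a b
    have : pd b f = fun y => (fderiv ℝ f y) (Pi.single b 1) := rfl
    rw [this]
    simp only [pd]
    rw [fderiv_clm_apply h' (differentiableAt_const _)]
    simp
  rw [key, key]
  exact (hf.isSymmSndFDerivAt (by simp; exact WithTop.coe_le_coe.2 le_top)) _ _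

/-- The Pontryagin density is the divergence of the Chern–Simons topological current. -/
theorem pontryagin_density_is_divergence_of_cs_current
    (U : Set (Fin 4 → ℝ)) (hU : IsOpen U)
    (Γ : Fin 4 → Fin 4 → Fin 4 → (Fin 4 → ℝ) → ℝ)
    (hΓ : ∀ n b m : Fin 4, ContDiffOn ℝ (⊤ : ℕ∞) (Γ n b m) U) :
    ∀ x ∈ U,
      ∑ a : Fin 4, pd a (csCurrent Γ a) x
        = (1/4) * ∑ a : Fin 4, ∑ b : Fin 4, ∑ c : Fin 4, ∑ d : Fin 4,
            leviCivita a b c d *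
              ∑ n : Fin 4, ∑ m : Fin 4, curv Γ n m a b x * curv Γ m n c d x := by
  intro x hx
  have hc : ∀ n b m, ContDiffAt ℝ (⊤ : ℕ∞) (Γ n b m) x := fun n b m =>
    (hΓ n b m).contDiffAt (hU.mem_nhds hx)
  have hd : ∀ n b m, DifferentiableAt ℝ (Γ n b m) x := fun n b m =>
    (hc n b m).differentiableAt (by simp)
  have hp : ∀ c n b m, DifferentiableAt ℝ (pd c (Γ n b m)) x := fun c n b m => pd_diff (hc n b m) c
  have hs : ∀ m c d n, DifferentiableAt ℝ (fun y => ∑ l : Fin 4, Γ m c l y * Γ l d n y) x :=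
    fun m c d n => DifferentiableAt.fun_sum fun l _ => (hd m c l).mul (hd l d n)
  have hq : ∀ m c d n, DifferentiableAt ℝ
      (fun y => pd c (Γ m d n) y + (2/3) * ∑ l : Fin 4, Γ m c l y * Γ l d n y) x :=
    fun m c d n => (hp c m d n).add ((hs m c d n).const_mul _)
  have ht : ∀ b c d n m, DifferentiableAt ℝ
      (fun y => Γ n b m y * (pd c (Γ m d n) y + (2/3) * ∑ l : Fin 4, Γ m c l y * Γ l d n y)) x :=
    fun b c d n m => (hd n b m).mul (hq m c d n)
  have hu : ∀ b c d, DifferentiableAt ℝ (fun y => ∑ n : Fin 4, ∑ m : Fin 4,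
      Γ n b m y * (pd c (Γ m d n) y + (2/3) * ∑ l : Fin 4, Γ m c l y * Γ l d n y)) x :=
    fun b c d => DifferentiableAt.fun_sum fun n _ => DifferentiableAt.fun_sum fun m _ => ht b c d n m
  have hK : ∀ a, pd a (csCurrent Γ a) x = ∑ b : Fin 4, ∑ c : Fin 4, ∑ d : Fin 4,
      leviCivita a b c d * ∑ n : Fin 4, ∑ m : Fin 4,
        (pd a (Γ n b m) x * (pd c (Γ m d n) x + (2/3) * ∑ l : Fin 4, Γ m c l x * Γ l d n x)
          + Γ n b m x * (pd a (pd c (Γ m d n)) x + (2/3) * ∑ l : Fin 4,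
            (pd a (Γ m c l) x * Γ l d n x + Γ m c l x * pd a (Γ l d n) x))) := by
    intro a
    have h0 : csCurrent Γ a = fun y => ∑ b : Fin 4, ∑ c : Fin 4, ∑ d : Fin 4,
      leviCivita a b c d * ∑ n : Fin 4, ∑ m : Fin 4,
      Γ n b m y * (pd c (Γ m d n) y + (2/3) * ∑ l : Fin 4, Γ m c l y * Γ l d n y) := rfl
    rw [h0, pd_sum fun b => DifferentiableAt.fun_sum fun c _ => DifferentiableAt.fun_sum fun d _ =>
      (hu b c d).const_mul _]
    refine Finset.sum_congr rfl fun b _ => ?_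
    rw [pd_sum fun c => DifferentiableAt.fun_sum fun d _ => (hu b c d).const_mul _]
    refine Finset.sum_congr rfl fun c _ => ?_
    rw [pd_sum fun d => (hu b c d).const_mul _]
    refine Finset.sum_congr rfl fun d _ => ?_
    rw [pd_cmul _ (hu b c d), pd_sum fun n => DifferentiableAt.fun_sum fun m _ => ht b c d n m]
    congr 1
    refine Finset.sum_congr rfl fun n _ => ?_
    rw [pd_sum fun m => ht b c d n m]
    refine Finset.sum_congr rfl fun m _ => ?_
    rw [pd_mul (hd n b m) (hq m c d n), pd_add (hp c m d n) ((hs m c d n).const_mul _),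
      pd_cmul _ (hs m c d n), pd_sum (f := fun l y => Γ m c l y * Γ l d n y) fun l => (hd m c l).mul (hd l d n)]
    congr 4
    refine Finset.sum_congr rfl fun l _ => ?_
    rw [← pd_mul (hd m c l) (hd l d n)]
  have main := alg (fun b => Matrix.of fun n m => Γ n b m x)
    (fun a b => Matrix.of fun n m => pd a (Γ n b m) x)
    (fun a b c => Matrix.of fun n m => pd a (pd b (Γ n c m)) x)
    (by intro a b c; ext n m; exact pd_comm (hc n c m) a b)
  unfold SS at main
  simp only [hK]
  refine Eq.trans ?_ (main.trans ?_)
  · refine Finset.sum_congr rfl fun a _ => Finset.sum_congr rfl fun b _ =>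
      Finset.sum_congr rfl fun c _ => Finset.sum_congr rfl fun d _ => ?_
    congr 1
    simp only [mul_assoc]
    simp only [Matrix.trace, Matrix.diag_apply, Matrix.mul_apply, Matrix.of_apply,
      ← Finset.sum_add_distrib, Finset.mul_sum]
    refine Finset.sum_congr rfl fun n _ => Finset.sum_congr rfl fun m _ => ?_
    simp only [mul_add, Finset.mul_sum, Finset.sum_add_distrib, mul_left_comm _ (2/3 : ℝ)]
    ring
  · congr 1
    refine Finset.sum_congr rfl fun a _ => Finset.sum_congr rfl fun b _ =>
      Finset.sum_congr rfl fun c _ => Finset.sum_congr rfl fun d _ => ?_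
    congr 1
    simp only [Matrix.trace, Matrix.diag_apply, Matrix.mul_apply, Matrix.of_apply, Matrix.add_apply,
      Matrix.sub_apply, curv, Finset.sum_sub_distrib]
end

section
/- Let f : EuclideanSpace ℝ (Fin 3) → ℝ be smooth on the complement of the origin and homogeneous of degree zero, i.e. f(t • x) = f(x) for all t > 0 and x ≠ 0. Then for every x ≠ 0, the Euclidean Laplacian of the function u(x) = f(x)/‖x‖ satisfies Δu(x) = (Δf)(x)/‖x‖. -/
open scoped BigOperators

/-- The Euclidean Laplacian on `ℝ³`: the sum of the second partial derivatives in the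
directions of the standard orthonormal basis. -/
noncomputable def lap (g : EuclideanSpace ℝ (Fin 3) → ℝ) (x : EuclideanSpace ℝ (Fin 3)) : ℝ :=
  ∑ i : Fin 3,
    fderiv ℝ (fun y => fderiv ℝ g y (EuclideanSpace.single i 1)) x (EuclideanSpace.single i 1)

abbrev E3 := EuclideanSpace ℝ (Fin 3)

lemma aux_norm (y : E3) (hy : y ≠ 0) :
    HasFDerivAt (fun z : E3 => ‖z‖) (‖y‖⁻¹ • innerSL ℝ y) y := by
  have hn : ‖y‖ ≠ 0 := norm_ne_zero_iff.mpr hy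
  have h1 := (hasStrictFDerivAt_norm_sq y).hasFDerivAt
  have h2 := h1.sqrt (by positivity)
  simp only [Real.sqrt_sq (norm_nonneg _)] at h2
  have e : ‖y‖⁻¹ • innerSL ℝ y = (1 / (2 * ‖y‖)) • (2 • innerSL ℝ y) := by
    ext v
    simp only [smul_apply, smul_eq_mul, nsmul_eq_mul]
    push_cast
    field_simp
  rw [e]
  exact h2

lemma aux_div (g h : E3 → ℝ) (g' h' : E3 →L[ℝ] ℝ) (y : E3) (hg : HasFDerivAt g g' y)
    (hh : HasFDerivAt h h' y) (h0 : h y ≠ 0) :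
    HasFDerivAt (fun z => g z / h z) ((h y)⁻¹ • g' - (g y / h y ^ 2) • h') y := by
  have h1 := hg.fun_mul ((hasDerivAt_inv h0).comp_hasFDerivAt y hh)
  have e : (h y)⁻¹ • g' - (g y / h y ^ 2) • h' =
      g y • (-(h y ^ 2)⁻¹ • h') + (h y)⁻¹ • g' := by
    ext v
    simp only [smul_apply, sub_apply,
      add_apply, smul_eq_mul]
    ring
  rw [e]
  exact h1

lemma aux_inner (y : E3) (i : Fin 3) :
    innerSL ℝ y (EuclideanSpace.single i 1) = y i := by
  simp [EuclideanSpace.inner_single_right]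

lemma aux_first (f : E3 → ℝ) (y : E3) (hy : y ≠ 0) (hd : DifferentiableAt ℝ f y) (i : Fin 3) :
    fderiv ℝ (fun z => f z / ‖z‖) y (EuclideanSpace.single i 1)
      = fderiv ℝ f y (EuclideanSpace.single i 1) / ‖y‖ - f y * y i / ‖y‖ ^ 3 := by
  have hn : ‖y‖ ≠ 0 := norm_ne_zero_iff.mpr hy
  have h := aux_div _ _ _ _ _ hd.hasFDerivAt (aux_norm y hy) hn
  rw [h.fderiv]
  have := aux_inner y i
  simp only [smul_apply, sub_apply, this, smul_eq_mul]
  field_simp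

lemma aux_coord (y : E3) (i : Fin 3) :
    HasFDerivAt (fun z : E3 => z i) (EuclideanSpace.proj i : E3 →L[ℝ] ℝ) y :=
  (EuclideanSpace.proj i : E3 →L[ℝ] ℝ).hasFDerivAt

lemma aux_second (f : E3 → ℝ) (hf : ContDiffOn ℝ (⊤ : ℕ∞) f {(0 : E3)}ᶜ)
    (x : E3) (hx : x ≠ 0) (i : Fin 3) :
    fderiv ℝ (fun y => fderiv ℝ (fun z => f z / ‖z‖) y (EuclideanSpace.single i 1)) x
        (EuclideanSpace.single i 1)
      = fderiv ℝ (fun y => fderiv ℝ f y (EuclideanSpace.single i 1)) x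
          (EuclideanSpace.single i 1) / ‖x‖
        - 2 * (fderiv ℝ f x (EuclideanSpace.single i 1) * x i) / ‖x‖ ^ 3
        - f x / ‖x‖ ^ 3 + 3 * f x * (x i) ^ 2 / ‖x‖ ^ 5 := by
  have hn : ‖x‖ ≠ 0 := norm_ne_zero_iff.mpr hx
  have hc : ∀ y : E3, y ≠ 0 → ContDiffAt ℝ (⊤ : ℕ∞) f y := fun y hy =>
    hf.contDiffAt (isOpen_compl_singleton.mem_nhds hy)
  have hd : ∀ y : E3, y ≠ 0 → DifferentiableAt ℝ f y := fun y hy =>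
    (hc y hy).differentiableAt (by simp)
  have hev : (fun y => fderiv ℝ (fun z => f z / ‖z‖) y (EuclideanSpace.single i 1))
      =ᶠ[nhds x] fun y => fderiv ℝ f y (EuclideanSpace.single i 1) / ‖y‖
        - f y * y i / ‖y‖ ^ 3 := by
    filter_upwards [isOpen_compl_singleton.mem_nhds hx] with y hy
    exact aux_first f y hy (hd y hy) i
  rw [hev.fderiv_eq]
  have hg : DifferentiableAt ℝ (fun y => fderiv ℝ f y (EuclideanSpace.single i 1)) x := by
    have : DifferentiableAt ℝ (fderiv ℝ f) x :=
      (((hc x hx).of_le (m := 2) (WithTop.coe_le_coe.mpr (le_top : (2 : ℕ∞) ≤ ⊤))).fderiv_right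
        (m := 1) (by norm_num)).differentiableAt (by simp)
    exact this.clm_apply (differentiableAt_const _)
  have hN := aux_norm x hx
  have hP : HasFDerivAt (fun z : E3 => ‖z‖ ^ 3) ((3 * ‖x‖ ^ 2) • (‖x‖⁻¹ • innerSL ℝ x)) x := by
    have := (hasDerivAt_pow 3 ‖x‖).comp_hasFDerivAt x hN
    norm_num at this
    exact this
  have h := (aux_div _ _ _ _ _ hg.hasFDerivAt hN hn).fun_sub
    (aux_div _ _ _ _ _ ((hd x hx).hasFDerivAt.fun_mul (aux_coord x i)) hP
      (pow_ne_zero 3 hn))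
  rw [h.fderiv]
  have h1 := aux_inner x i
  have h2 : (EuclideanSpace.proj i : E3 →L[ℝ] ℝ) (EuclideanSpace.single i 1) = 1 := by simp
  simp only [smul_apply, sub_apply,
    add_apply, h1, h2, smul_eq_mul, nsmul_eq_mul]
  field_simp
  push_cast
  ring

lemma aux_euler (f : E3 → ℝ) (x : E3) (hx : x ≠ 0) (hd : DifferentiableAt ℝ f x)
    (hhom : ∀ t : ℝ, 0 < t → ∀ x : E3, x ≠ 0 → f (t • x) = f x) :
    fderiv ℝ f x x = 0 := by
  have h1 : HasDerivAt (fun t : ℝ => t • x) x 1 := by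
    simpa using (hasDerivAt_id (1:ℝ)).smul_const x
  have h2 : HasFDerivAt f (fderiv ℝ f x) ((1:ℝ) • x) := by
    rw [one_smul]; exact hd.hasFDerivAt
  have h3 := h2.comp_hasDerivAt (1:ℝ) h1
  have h4 : HasDerivAt (f ∘ fun t : ℝ => t • x) 0 1 := by
    refine (hasDerivAt_const (1:ℝ) (f x)).congr_of_eventuallyEq ?_
    filter_upwards [lt_mem_nhds (zero_lt_one (α := ℝ))] with t ht
    exact hhom t ht x hx
  exact h3.unique h4

/-- For `f` smooth away from the origin and homogeneous of degree zero,
the Laplacian of `u(x) = f(x)/‖x‖` satisfies `Δu(x) = (Δf)(x)/‖x‖` for `x ≠ 0`. -/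
theorem laplacian_of_degree_zero_homogeneous_over_norm
    (f : EuclideanSpace ℝ (Fin 3) → ℝ)
    (hf : ContDiffOn ℝ (⊤ : ℕ∞) f {(0 : EuclideanSpace ℝ (Fin 3))}ᶜ)
    (hhom : ∀ t : ℝ, 0 < t → ∀ x : EuclideanSpace ℝ (Fin 3), x ≠ 0 → f (t • x) = f x) :
    ∀ x : EuclideanSpace ℝ (Fin 3), x ≠ 0 →
      lap (fun y => f y / ‖y‖) x = lap f x / ‖x‖ := by
  intro x hx
  have hn : ‖x‖ ≠ 0 := norm_ne_zero_iff.mpr hx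
  have hd : DifferentiableAt ℝ f x :=
    (hf.contDiffAt (isOpen_compl_singleton.mem_nhds hx)).differentiableAt (by simp)
  have he := aux_euler f x hx hd hhom
  have hsum : x = ∑ i : Fin 3, x i • EuclideanSpace.single i (1:ℝ) := by
    ext j
    fin_cases j <;> simp [Fin.sum_univ_three]
  have he2 : ∑ i : Fin 3, fderiv ℝ f x (EuclideanSpace.single i 1) * x i = 0 := by
    rw [← he]
    conv_rhs => rw [hsum, map_sum]
    rw [← hsum]
    simp [mul_comm]
  have hnorm : ‖x‖ ^ 2 = x 0 ^ 2 + x 1 ^ 2 + x 2 ^ 2 := by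
    rw [EuclideanSpace.real_norm_sq_eq, Fin.sum_univ_three]
  unfold lap
  rw [Finset.sum_congr rfl (fun i _ => aux_second f hf x hx i)]
  simp only [Fin.sum_univ_three] at he2 ⊢
  generalize fderiv ℝ (fun y => fderiv ℝ f y (EuclideanSpace.single 0 1)) x
    (EuclideanSpace.single 0 1) = A0
  generalize fderiv ℝ (fun y => fderiv ℝ f y (EuclideanSpace.single 1 1)) x
    (EuclideanSpace.single 1 1) = A1
  generalize fderiv ℝ (fun y => fderiv ℝ f y (EuclideanSpace.single 2 1)) x
    (EuclideanSpace.single 2 1) = A2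
  generalize fderiv ℝ f x (EuclideanSpace.single 0 1) = B0 at *
  generalize fderiv ℝ f x (EuclideanSpace.single 1 1) = B1 at *
  generalize fderiv ℝ f x (EuclideanSpace.single 2 1) = B2 at *
  have h5 : f x / ‖x‖ ^ 3 = f x * (x 0 ^ 2 + x 1 ^ 2 + x 2 ^ 2) / ‖x‖ ^ 5 := by
    rw [← hnorm]; field_simp
  rw [h5]
  linear_combination (-2 / ‖x‖ ^ 3) * he2
end

section
/- Let f : EuclideanSpace ℝ (Fin 3) → ℝ be smooth on the complement of the origin, homogeneous of degree zero (f(t • x) = f(x) for all t > 0, x ≠ 0), and harmonic on the complement of the origin, i.e. Δf(x) = 0 for all x ≠ 0. Then f is constant. -/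
open scoped BigOperators

open Filter Topology

local notation "E3" => EuclideanSpace ℝ (Fin 3)

lemma aux_second_s8 (g g1 : ℝ → ℝ) (c : ℝ) (h1 : ∀ᶠ t in 𝓝 (0:ℝ), HasDerivAt g (g1 t) t)
    (h2 : HasDerivAt g1 c 0) (hm : IsLocalMax g 0) : c ≤ 0 := by
  by_contra hc
  push Not at hc
  have e1 : deriv g =ᶠ[𝓝 0] g1 := h1.mono fun t ht => ht.deriv
  have e2 : deriv (deriv g) 0 = c := by rw [e1.deriv_eq, h2.deriv]
  have hmin : IsLocalMin g 0 := by
    apply isLocalMin_of_deriv_deriv_pos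
    · rw [e2]; exact hc
    · exact hm.deriv_eq_zero
    · exact h1.self_of_nhds.continuousAt
  have hconst : g =ᶠ[𝓝 0] fun _ => g 0 := by
    filter_upwards [hm, hmin] with t h1 h2
    exact le_antisymm h1 h2
  have e3 : deriv g =ᶠ[𝓝 0] deriv (fun _ => g 0) := hconst.deriv
  have : deriv (deriv g) 0 = 0 := by
    rw [e3.deriv_eq]; simp
  linarith

lemma aux_line (a b q : ℝ) (hb : b < 1) :
    ∃ w1 : ℝ → ℝ, (∀ᶠ t in 𝓝 (0:ℝ), HasDerivAt
      (fun t => -Real.log (1 - (b + t * q) * (√(1 + 2 * a * t + t ^ 2))⁻¹)) (w1 t) t) ∧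
      HasDerivAt w1 ((-2 * q * a - b + 3 * a ^ 2 * b) / (1 - b) + (q - b * a) ^ 2 / (1 - b) ^ 2) 0 := by
  set R : ℝ → ℝ := fun t => (√(1 + 2 * a * t + t ^ 2))⁻¹ with hR
  set s : ℝ → ℝ := fun t => (b + t * q) * R t with hs
  have hRd : ∀ t, 0 < 1 + 2 * a * t + t ^ 2 → HasDerivAt R (-(a + t) * R t ^ 3) t := by
    intro t ht
    have hQ : HasDerivAt (fun t : ℝ => 1 + 2 * a * t + t ^ 2) (2 * a + 2 * t) t := by
      have := (((hasDerivAt_id t).const_mul (2 * a)).const_add 1).add (hasDerivAt_pow 2 t)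
      exact this.congr_deriv (by simp)
    have := (hQ.sqrt ht.ne').inv (Real.sqrt_pos.2 ht).ne'
    refine this.congr_deriv ?_
    have := (Real.sqrt_pos.2 ht).ne'
    simp only [hR]
    field_simp
  have hlin : ∀ t : ℝ, HasDerivAt (fun t : ℝ => b + t * q) q t := by
    intro t
    simpa using ((hasDerivAt_id t).mul_const q).const_add b
  have hsd : ∀ t, 0 < 1 + 2 * a * t + t ^ 2 →
      HasDerivAt s (q * R t + (b + t * q) * (-(a + t) * R t ^ 3)) t := by
    intro t ht
    exact (hlin t).mul (hRd t ht)
  have hR0 : R 0 = 1 := by simp [hR]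
  have hs0 : s 0 = b := by simp [hs, hR0]
  have hQ0 : (0:ℝ) < 1 + 2 * a * 0 + 0 ^ 2 := by norm_num
  have evQ : ∀ᶠ t in 𝓝 (0:ℝ), 0 < 1 + 2 * a * t + t ^ 2 := by
    have : ContinuousAt (fun t : ℝ => 1 + 2 * a * t + t ^ 2) 0 := by fun_prop
    exact this.eventually (lt_mem_nhds hQ0)
  have evs : ∀ᶠ t in 𝓝 (0:ℝ), s t < 1 := by
    refine (hsd 0 hQ0).continuousAt.eventually (gt_mem_nhds ?_)
    rw [hs0]; exact hb
  refine ⟨fun t => (q * R t + (b + t * q) * (-(a + t) * R t ^ 3)) / (1 - s t), ?_, ?_⟩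
  · filter_upwards [evQ, evs] with t h1 h2
    have := (((hsd t h1).const_sub 1).log (by linarith)).neg
    exact this.congr_deriv (by ring)
  · have hat : HasDerivAt (fun t : ℝ => -(a + t)) (-1) 0 := by
      exact ((hasDerivAt_id (0:ℝ)).const_add a).neg
    have hR1 := hRd 0 hQ0
    have := ((hR1.const_mul q).add ((hlin 0).mul (hat.mul (hR1.pow 3)))).div
      ((hsd 0 hQ0).const_sub 1) (by rw [hs0]; linarith)
    refine this.congr_deriv ?_
    have : 1 - b ≠ 0 := by linarith
    simp [hR0, hs0]
    field_simp
    ring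

lemma aux_key (f : E3 → ℝ) (hf : ContDiffOn ℝ (⊤ : ℕ∞) f {(0 : E3)}ᶜ)
    (x q : E3) (hx : ‖x‖ = 1) (hq : ‖q‖ = 1) (hb : inner ℝ x q < 1) (ε : ℝ) (hε : 0 < ε)
    (hm : IsLocalMax (fun y => f y + ε * (-Real.log (1 - inner ℝ y q * ‖y‖⁻¹))) x)
    (hl : lap f x = 0) : False := by
  have hx0 : x ≠ 0 := by rintro rfl; simp at hx
  have hopen : IsOpen ({(0 : E3)}ᶜ : Set E3) := isOpen_compl_singleton
  have hfd : ∀ y : E3, y ≠ 0 → DifferentiableAt ℝ f y := fun y hy =>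
    (hf.contDiffAt (hopen.mem_nhds hy)).differentiableAt (by simp)
  have hx2 : x 0 ^ 2 + x 1 ^ 2 + x 2 ^ 2 = 1 := by
    have := EuclideanSpace.real_norm_sq_eq x
    rw [hx, Fin.sum_univ_three] at this; linarith
  have hq2 : q 0 ^ 2 + q 1 ^ 2 + q 2 ^ 2 = 1 := by
    have := EuclideanSpace.real_norm_sq_eq q
    rw [hq, Fin.sum_univ_three] at this; linarith
  have hxq : inner ℝ x q = x 0 * q 0 + x 1 * q 1 + x 2 * q 2 := by
    simp [PiLp.inner_apply, Fin.sum_univ_three]; ring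
  set b : ℝ := inner ℝ x q with hbdef
  have main : ∀ i : Fin 3,
      fderiv ℝ (fun y => fderiv ℝ f y (EuclideanSpace.single i 1)) x (EuclideanSpace.single i 1)
      + ε * ((-2 * q i * x i - b + 3 * x i ^ 2 * b) / (1 - b)
        + (q i - b * x i) ^ 2 / (1 - b) ^ 2) ≤ 0 := by
    intro i
    set e : E3 := EuclideanSpace.single i 1 with he
    obtain ⟨w1, hw1, hw2⟩ := aux_line (x i) b (q i) hb
    have hline : ∀ t : ℝ, HasDerivAt (fun t : ℝ => x + t • e) e t := by
      intro t
      simpa using ((hasDerivAt_id t).smul_const e).const_add x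
    have hlc : Tendsto (fun t : ℝ => x + t • e) (𝓝 0) (𝓝 x) := by
      have := (hline 0).continuousAt
      simpa [ContinuousAt] using this
    have hinner : ∀ t : ℝ, inner ℝ (x + t • e) q = b + t * q i := by
      intro t
      simp [inner_add_left, inner_smul_left, he, EuclideanSpace.inner_single_left, hbdef]
    have hnorm : ∀ t : ℝ, ‖x + t • e‖ = √(1 + 2 * x i * t + t ^ 2) := by
      intro t
      rw [← Real.sqrt_sq (norm_nonneg (x + t • e)), norm_add_sq_real]
      congr 1
      simp [inner_smul_right, he, EuclideanSpace.inner_single_right, hx, norm_smul]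
      ring
    refine aux_second_s8 (fun t => f (x + t • e) + ε * (-Real.log (1 - (b + t * q i) *
        (√(1 + 2 * x i * t + t ^ 2))⁻¹)))
      (fun t => fderiv ℝ f (x + t • e) e + ε * w1 t) _ ?_ ?_ ?_
    · filter_upwards [hw1, hlc.eventually (hopen.mem_nhds hx0)] with t h1 h2
      exact ((hfd _ h2).hasFDerivAt.comp_hasDerivAt t (hline t)).add (h1.const_mul ε)
    · refine HasDerivAt.add ?_ (hw2.const_mul ε)
      have hd : DifferentiableAt ℝ (fun y => fderiv ℝ f y e) x := by
        have h2 : ContDiffAt ℝ 1 (fderiv ℝ f) x :=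
          (hf.contDiffAt (hopen.mem_nhds hx0)).fderiv_right (by norm_cast)
        exact (h2.differentiableAt (by simp)).clm_apply (differentiableAt_const _)
      have h3 : HasFDerivAt (fun y => fderiv ℝ f y e) (fderiv ℝ (fun y => fderiv ℝ f y e) x)
          (x + (0:ℝ) • e) := by simpa using hd.hasFDerivAt
      exact h3.comp_hasDerivAt (0:ℝ) (hline 0)
    · have := hlc.eventually hm
      filter_upwards [this] with t ht
      have h0 := hinner 0
      have h0' := hnorm 0
      simp only [hinner, hnorm] at ht
      simpa [hx, hbdef] using ht
  have m0 := main 0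
  have m1 := main 1
  have m2 := main 2
  unfold lap at hl
  rw [Fin.sum_univ_three] at hl
  have hb' : 1 - b ≠ 0 := by linarith
  have key : ((-2 * q 0 * x 0 - b + 3 * x 0 ^ 2 * b) / (1 - b) + (q 0 - b * x 0) ^ 2 / (1 - b) ^ 2)
    + ((-2 * q 1 * x 1 - b + 3 * x 1 ^ 2 * b) / (1 - b) + (q 1 - b * x 1) ^ 2 / (1 - b) ^ 2)
    + ((-2 * q 2 * x 2 - b + 3 * x 2 ^ 2 * b) / (1 - b) + (q 2 - b * x 2) ^ 2 / (1 - b) ^ 2)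
     = 1 := by
    have s1 : (-2 * q 0 * x 0 - b + 3 * x 0 ^ 2 * b) + (-2 * q 1 * x 1 - b + 3 * x 1 ^ 2 * b)
      + (-2 * q 2 * x 2 - b + 3 * x 2 ^ 2 * b) = -2 * b := by
      linear_combination 3 * b * hx2 + 2 * hxq
    have s2 : (q 0 - b * x 0) ^ 2 + (q 1 - b * x 1) ^ 2 + (q 2 - b * x 2) ^ 2 = 1 - b ^ 2 := by
      linear_combination hq2 + b ^ 2 * hx2 + 2 * b * hxq
    calc _ = ((-2 * q 0 * x 0 - b + 3 * x 0 ^ 2 * b) + (-2 * q 1 * x 1 - b + 3 * x 1 ^ 2 * b)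
      + (-2 * q 2 * x 2 - b + 3 * x 2 ^ 2 * b)) / (1 - b) +
      ((q 0 - b * x 0) ^ 2 + (q 1 - b * x 1) ^ 2 + (q 2 - b * x 2) ^ 2) / (1 - b) ^ 2 := by ring
      _ = 1 := by rw [s1, s2]; field_simp; ring
  have := congrArg (fun z => ε * z) key
  simp only [mul_add, mul_one] at this m0 m1 m2
  linarith

lemma aux_main (f : E3 → ℝ)
    (hf : ContDiffOn ℝ (⊤ : ℕ∞) f {(0 : E3)}ᶜ)
    (hhom : ∀ t : ℝ, 0 < t → ∀ x : E3, x ≠ 0 → f (t • x) = f x)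
    (hharm : ∀ x : E3, x ≠ 0 → lap f x = 0) (p q : E3) (hp : ‖p‖ = 1) (hq : ‖q‖ = 1)
    (hmax : ∀ x : E3, ‖x‖ = 1 → f x ≤ f p) : f p ≤ f q := by
  by_contra hlt
  push Not at hlt
  have hne : ∀ x : E3, ‖x‖ = 1 → x ≠ 0 := by rintro x hx rfl; simp at hx
  have hcont := hf.continuousOn
  have hopen : IsOpen ({(0 : E3)}ᶜ : Set E3) := isOpen_compl_singleton
  have hdist : ∀ x : E3, ‖x‖ = 1 → ‖x - q‖ ^ 2 = 2 * (1 - inner ℝ x q) := by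
    intro x hx
    rw [norm_sub_sq_real, hx, hq]; ring
  obtain ⟨mid, hm1, hm2⟩ := exists_between hlt
  obtain ⟨r, hr, hball⟩ : ∃ r > 0, ∀ x : E3, ‖x - q‖ < r → f x < mid := by
    have := (hcont.continuousAt (hopen.mem_nhds (hne q hq))).eventually (gt_mem_nhds hm1)
    obtain ⟨r, hr, h⟩ := Metric.eventually_nhds_iff.1 this
    exact ⟨r, hr, fun x hx => h (by rwa [dist_eq_norm])⟩
  set h : E3 → ℝ := fun y => -Real.log (1 - inner ℝ y q * ‖y‖⁻¹) with hh
  set K : Set E3 := Metric.sphere 0 1 ∩ {x | r / 2 ≤ ‖x - q‖} with hK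
  have hKc : IsCompact K := (isCompact_sphere (0 : E3) 1).inter_right
    (isClosed_le continuous_const (by fun_prop))
  have hK1 : ∀ x ∈ K, ‖x‖ = 1 := fun x hx => by simpa using hx.1
  have hKi : ∀ x ∈ K, inner ℝ x q < 1 := by
    intro x hx
    have h1 := hdist x (hK1 x hx)
    have h2 : r / 2 ≤ ‖x - q‖ := hx.2
    have : 0 < ‖x - q‖ ^ 2 := pow_pos (by linarith) 2
    linarith
  have hKcont : ContinuousOn h K := by
    refine (ContinuousOn.log ?_ ?_).neg
    · refine continuousOn_const.sub (ContinuousOn.mul (by fun_prop) (ContinuousOn.inv₀ (by fun_prop) ?_))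
      intro x hx; rw [hK1 x hx]; norm_num
    · intro x hx
      rw [hK1 x hx]
      have := hKi x hx
      simp; linarith
  obtain ⟨C, hC⟩ := hKc.exists_bound_of_continuousOn hKcont
  have hpK : p ∈ K := by
    refine ⟨by simpa using hp, ?_⟩
    by_contra hcon
    have hcon : ¬ (r / 2 ≤ ‖p - q‖) := hcon
    have := hball p (by linarith)
    linarith
  have hC0 : 0 ≤ C := (norm_nonneg _).trans (hC p hpK)
  set ε : ℝ := (f p - mid) / (2 * C + 1) with hεdef
  have hε : 0 < ε := div_pos (by linarith) (by linarith)
  have hεC : ε * (2 * C) < f p - mid := by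
    have : ε * (2 * C + 1) = f p - mid := by rw [hεdef]; field_simp
    linarith
  obtain ⟨x, hxK, hxmax⟩ := hKc.exists_isMaxOn ⟨p, hpK⟩
    (f := fun y => f y + ε * h y)
    ((hcont.mono fun y hy => hne y (hK1 y hy)).add (continuousOn_const.mul hKcont))
  have hx1 := hK1 x hxK
  have hxr : r ≤ ‖x - q‖ := by
    by_contra hcon
    push Not at hcon
    have h1 := hball x hcon
    have h2 : f p + ε * h p ≤ f x + ε * h x := hxmax hpK
    have h3 := abs_le.1 (hC p hpK)
    have h4 := abs_le.1 (hC x hxK)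
    have h5 := mul_le_mul_of_nonneg_left h3.1 hε.le
    have h6 := mul_le_mul_of_nonneg_left h4.2 hε.le
    linarith
  refine aux_key f hf x q hx1 hq (hKi x hxK) ε hε ?_ (hharm x (hne x hx1))
  have hcn : ContinuousAt (fun y : E3 => ‖‖y‖⁻¹ • y - q‖) x := by
    have : ContinuousAt (fun y : E3 => ‖y‖⁻¹) x :=
      continuousAt_id.norm.inv₀ (by simp [hx1])
    exact ((this.smul continuousAt_id).sub continuousAt_const).norm
  have ev : ∀ᶠ y in 𝓝 x, r / 2 < ‖‖y‖⁻¹ • y - q‖ := by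
    refine hcn.eventually (lt_mem_nhds ?_)
    simp only [hx1, inv_one, one_smul]; linarith
  filter_upwards [ev, hopen.mem_nhds (hne x hx1)] with y hy hy0
  have hy0 : y ≠ 0 := hy0
  have hyn : ‖y‖ ≠ 0 := norm_ne_zero_iff.2 hy0
  have hu : ‖‖y‖⁻¹ • y‖ = 1 := by rw [norm_smul, norm_inv, norm_norm]; field_simp
  have huK : ‖y‖⁻¹ • y ∈ K := ⟨by simpa using hu, hy.le⟩
  have h1 : f (‖y‖⁻¹ • y) + ε * h (‖y‖⁻¹ • y) ≤ f x + ε * h x := hxmax huK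
  rw [hhom _ (by positivity) y hy0] at h1
  have h2 : h (‖y‖⁻¹ • y) = h y := by
    simp only [hh]
    rw [hu, real_inner_smul_left]
    congr 3; ring
  rw [h2] at h1
  exact h1

theorem degree_zero_homogeneous_harmonic_is_constant
    (f : EuclideanSpace ℝ (Fin 3) → ℝ)
    (hf : ContDiffOn ℝ (⊤ : ℕ∞) f {(0 : EuclideanSpace ℝ (Fin 3))}ᶜ)
    (hhom : ∀ t : ℝ, 0 < t → ∀ x : EuclideanSpace ℝ (Fin 3), x ≠ 0 → f (t • x) = f x)
    (hharm : ∀ x : EuclideanSpace ℝ (Fin 3), x ≠ 0 → lap f x = 0) :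
    ∀ x y : EuclideanSpace ℝ (Fin 3), x ≠ 0 → y ≠ 0 → f x = f y := by
  have hne : ∀ x : E3, ‖x‖ = 1 → x ≠ 0 := by rintro x hx rfl; simp at hx
  have hcs : ContinuousOn f (Metric.sphere 0 1) :=
    hf.continuousOn.mono fun y hy => hne y (by simpa using hy)
  obtain ⟨p, hp, hpm⟩ := (isCompact_sphere (0 : E3) 1).exists_isMaxOn
    ⟨EuclideanSpace.single 0 1, by simp⟩ hcs
  have hp1 : ‖p‖ = 1 := by simpa using hp
  have hmax : ∀ x : E3, ‖x‖ = 1 → f x ≤ f p := fun x hx => hpm (by simpa using hx)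
  have all : ∀ x : E3, x ≠ 0 → f x = f p := by
    intro x hx
    have hyn : ‖x‖ ≠ 0 := norm_ne_zero_iff.2 hx
    have hu : ‖‖x‖⁻¹ • x‖ = 1 := by rw [norm_smul, norm_inv, norm_norm]; field_simp
    rw [← hhom _ (by positivity : 0 < ‖x‖⁻¹) x hx]
    exact le_antisymm (hmax _ hu) (aux_main f hf hhom hharm p _ hp1 hu hmax)
  intro x y hx hy
  rw [all x hx, all y hy]
end
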